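/- arXiv:1505.00403 — 6 statements merged into one kernel-verified Lean document; each statement's English description precedes it below -/
import Mathlib

section
/- Let g be a Lie 2-algebra over a field F. If (X₀,X₁,l_X) and (Y₀,Y₁,l_Y) are derivations of degree 0 of g, then so is ([X₀,Y₀], [X₁,Y₁], L_X l_Y − L_Y l_X), where [X₀,Y₀] = X₀Y₀ − Y₀X₀, [X₁,Y₁] = X₁Y₁ − Y₁X₁. That is, the bracket {(X,l_X),(Y,l_Y)} := ([X,Y]_C, L_X l_Y − L_Y l_X) is closed on degree-0 derivations. -/
open LinearMap

/-- A (semistrict) Lie 2-algebra `g = (g₀ ⊕ g₋₁, d, [·,·], l₃)` over a field `F`: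
a linear map `d : g₋₁ → g₀`, a skew-symmetric bracket `b0` on `g₀`, a mixed
bracket `b1 : g₀ × g₋₁ → g₋₁` (with `[a,x] := -[x,a]`), and an alternating
trilinear `l3 : g₀³ → g₋₁` satisfying axioms (a), (b), (c). -/
structure LieTwoAlg (F : Type*) [Field F] (g0 gm : Type*)
    [AddCommGroup g0] [Module F g0] [AddCommGroup gm] [Module F gm] where
  d : gm →ₗ[F] g0
  b0 : g0 →ₗ[F] g0 →ₗ[F] g0
  b1 : g0 →ₗ[F] gm →ₗ[F] gm
  l3 : g0 →ₗ[F] g0 →ₗ[F] g0 →ₗ[F] gm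
  b0_skew : ∀ x y, b0 x y = - b0 y x
  l3_alt₁ : ∀ x y, l3 x x y = 0
  l3_alt₂ : ∀ x y, l3 x y y = 0
  ax_a1 : ∀ x a, d (b1 x a) = b0 x (d a)
  ax_a2 : ∀ a b, b1 (d a) b = - b1 (d b) a
  ax_b1 : ∀ x y z, b0 (b0 x y) z + b0 (b0 y z) x + b0 (b0 z x) y = - d (l3 x y z)
  ax_b2 : ∀ x y a, b1 (b0 x y) a - b1 x (b1 y a) + b1 y (b1 x a) = - l3 x y (d a)
  ax_c : ∀ x y z w,
    l3 (b0 x y) z w + l3 (b0 y z) w x + l3 (b0 z w) x y + l3 (b0 w x) y z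
      = -(b1 w (l3 x y z) + b1 x (l3 y z w) + b1 y (l3 z w x) + b1 z (l3 w x y))

/-- A derivation of degree 0 of the (raw) Lie 2-algebra data `(d, b0, b1, l3)`:
a triple `(X0, X1, lX)` with `X0 ∘ d = d ∘ X1` and `lX` alternating bilinear,
satisfying conditions (a), (b), (c) of Definition 3.2. -/
structure IsDer0 {F : Type*} [Field F] {g0 gm : Type*}
    [AddCommGroup g0] [Module F g0] [AddCommGroup gm] [Module F gm]
    (d : gm →ₗ[F] g0) (b0 : g0 →ₗ[F] g0 →ₗ[F] g0) (b1 : g0 →ₗ[F] gm →ₗ[F] gm)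
    (l3 : g0 →ₗ[F] g0 →ₗ[F] g0 →ₗ[F] gm)
    (X0 : g0 →ₗ[F] g0) (X1 : gm →ₗ[F] gm) (lX : g0 →ₗ[F] g0 →ₗ[F] gm) : Prop where
  comm : X0 ∘ₗ d = d ∘ₗ X1
  alt : ∀ x, lX x x = 0
  der_a : ∀ x y, d (lX x y) = X0 (b0 x y) - b0 (X0 x) y - b0 x (X0 y)
  der_b : ∀ x a, lX x (d a) = X1 (b1 x a) - b1 (X0 x) a - b1 x (X1 a)
  der_c : ∀ x y z, X1 (l3 x y z) =
      lX x (b0 y z) + lX y (b0 z x) + lX z (b0 x y)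
      + b1 x (lX y z) + b1 y (lX z x) + b1 z (lX x y)
      + l3 (X0 x) y z + l3 (X0 y) z x + l3 (X0 z) x y

/-- `(L_X ω)(x,y) = X₁(ω(x,y)) − ω(X₀x,y) − ω(x,X₀y)`. -/
def Lop {F : Type*} [Field F] {g0 gm : Type*}
    [AddCommGroup g0] [Module F g0] [AddCommGroup gm] [Module F gm]
    (X0 : g0 →ₗ[F] g0) (X1 : gm →ₗ[F] gm) (ω : g0 →ₗ[F] g0 →ₗ[F] gm) :
    g0 →ₗ[F] g0 →ₗ[F] gm :=
  ω.compr₂ X1 - ω ∘ₗ X0 - ω.compl₂ X0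

/-- `l_{δ(Θ)}(x,y) = Θ[x,y] − [x,Θy] − [Θx,y]`. -/
def ldelta {F : Type*} [Field F] {g0 gm : Type*}
    [AddCommGroup g0] [Module F g0] [AddCommGroup gm] [Module F gm]
    (G : LieTwoAlg F g0 gm) (Θ : g0 →ₗ[F] gm) : g0 →ₗ[F] g0 →ₗ[F] gm :=
  G.b0.compr₂ Θ - G.b1.compl₂ Θ + (G.b1.compl₂ Θ).flip

/-- the bracket `{(X,l_X),(Y,l_Y)} = ([X,Y]_C, L_X l_Y − L_Y l_X)` is
closed on degree-0 derivations of a Lie 2-algebra. -/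
theorem bracket_of_der0_is_der0
    {F : Type*} [Field F] {g0 gm : Type*}
    [AddCommGroup g0] [Module F g0] [AddCommGroup gm] [Module F gm]
    (G : LieTwoAlg F g0 gm)
    (X0 : g0 →ₗ[F] g0) (X1 : gm →ₗ[F] gm) (lX : g0 →ₗ[F] g0 →ₗ[F] gm)
    (Y0 : g0 →ₗ[F] g0) (Y1 : gm →ₗ[F] gm) (lY : g0 →ₗ[F] g0 →ₗ[F] gm)
    (hX : IsDer0 G.d G.b0 G.b1 G.l3 X0 X1 lX)
    (hY : IsDer0 G.d G.b0 G.b1 G.l3 Y0 Y1 lY) :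
    IsDer0 G.d G.b0 G.b1 G.l3
      (X0 ∘ₗ Y0 - Y0 ∘ₗ X0) (X1 ∘ₗ Y1 - Y1 ∘ₗ X1)
      (Lop X0 X1 lY - Lop Y0 Y1 lX) := by
  have cX : ∀ a, X0 (G.d a) = G.d (X1 a) := fun a => LinearMap.congr_fun hX.comm a
  have cY : ∀ a, Y0 (G.d a) = G.d (Y1 a) := fun a => LinearMap.congr_fun hY.comm a
  have sX : ∀ x y, lX x y = - lX y x := by
    intro x y
    have h := hX.alt (x + y)
    simp only [map_add, LinearMap.add_apply, hX.alt, zero_add, add_zero] at h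
    exact eq_neg_of_add_eq_zero_right h
  have sY : ∀ x y, lY x y = - lY y x := by
    intro x y
    have h := hY.alt (x + y)
    simp only [map_add, LinearMap.add_apply, hY.alt, zero_add, add_zero] at h
    exact eq_neg_of_add_eq_zero_right h
  have s1 : ∀ x y z, G.l3 x y z = - G.l3 y x z := by
    intro x y z
    have h := G.l3_alt₁ (x + y) z
    simp only [map_add, LinearMap.add_apply, G.l3_alt₁, zero_add, add_zero] at h
    exact eq_neg_of_add_eq_zero_right h
  have s2 : ∀ x y z, G.l3 x y z = - G.l3 x z y := by
    intro x y z
    have h := G.l3_alt₂ x (y + z)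
    simp only [map_add, LinearMap.add_apply, G.l3_alt₂, zero_add, add_zero] at h
    exact eq_neg_of_add_eq_zero_right h
  have cyc : ∀ x y z, G.l3 x y z = G.l3 y z x := by
    intro x y z
    rw [s1 x y z, s2 y x z, neg_neg]
  have bX : ∀ x a, X1 (G.b1 x a) = lX x (G.d a) + G.b1 (X0 x) a + G.b1 x (X1 a) := by
    intro x a; rw [hX.der_b]; abel
  have bY : ∀ x a, Y1 (G.b1 x a) = lY x (G.d a) + G.b1 (Y0 x) a + G.b1 x (Y1 a) := by
    intro x a; rw [hY.der_b]; abel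
  refine ⟨?_, ?_, ?_, ?_, ?_⟩
  · ext a
    simp [cX, cY]
  · intro x
    simp only [Lop, LinearMap.sub_apply, LinearMap.compr₂_apply, LinearMap.comp_apply,
      LinearMap.compl₂_apply, hX.alt, hY.alt, map_zero]
    rw [sX x (Y0 x), sY x (X0 x)]
    abel
  · intro x y
    simp only [Lop, LinearMap.sub_apply, LinearMap.compr₂_apply, LinearMap.comp_apply,
      LinearMap.compl₂_apply, map_sub, ← cX, ← cY, hX.der_a, hY.der_a]
    abel
  · intro x a
    simp only [Lop, LinearMap.sub_apply, LinearMap.compr₂_apply, LinearMap.comp_apply,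
      LinearMap.compl₂_apply, map_sub, cX, cY, hX.der_b, hY.der_b]
    abel
  · intro x y z
    simp only [Lop, LinearMap.sub_apply, LinearMap.compr₂_apply, LinearMap.comp_apply,
      LinearMap.compl₂_apply, map_sub, map_add, hX.der_c, hY.der_c, bX, bY, hX.der_a, hY.der_a]
    simp only [← cyc (X0 _) (Y0 _) _, ← cyc (Y0 _) (X0 _) _]
    rw [sX (Y0 x) y]
    abel
end

section
/- Let g be a Lie 2-algebra over a field F. (1) For all Θ, Θ′ ∈ Hom(g₀,g₋₁), d̄({Θ,Θ′}) = {d̄(Θ), d̄(Θ′)}, where {Θ,Θ′} := Θ∘d∘Θ′ − Θ′∘d∘Θ and the right-hand bracket of degree-0 derivations is {(X,l_X),(Y,l_Y)} = ([X,Y]_C, L_X l_Y − L_Y l_X); explicitly, besides the commutator identities this asserts l_{δ(Θ∘d∘Θ′ − Θ′∘d∘Θ)} = L_{δ(Θ)} l_{δ(Θ′)} − L_{δ(Θ′)} l_{δ(Θ)}. (2) For every derivation of degree 0 (X₀,X₁,l_X) of g and every Θ ∈ Hom(g₀,g₋₁), d̄(X₁∘Θ − Θ∘X₀) = {(X,l_X),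 d̄(Θ)}; explicitly, d∘(X₁∘Θ − Θ∘X₀) = [X₀, d∘Θ], (X₁∘Θ − Θ∘X₀)∘d = [X₁, Θ∘d], and l_{δ(X₁∘Θ − Θ∘X₀)} = L_X l_{δ(Θ)} − L_{δ(Θ)} l_X. -/
open LinearMap

/-- `d̄` is compatible with the brackets:
(1) `d̄({Θ,Θ′}) = {d̄(Θ), d̄(Θ′)}` where `{Θ,Θ′} = Θ∘d∘Θ′ − Θ′∘d∘Θ`;
(2) `d̄(X₁∘Θ − Θ∘X₀) = {(X,l_X), d̄(Θ)}` for every degree-0 derivation `(X,l_X)`. -/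
theorem dbar_bracket_compat
    {F : Type*} [Field F] {g0 gm : Type*}
    [AddCommGroup g0] [Module F g0] [AddCommGroup gm] [Module F gm]
    (G : LieTwoAlg F g0 gm) :
    (∀ Θ Θ' : g0 →ₗ[F] gm,
      G.d ∘ₗ (Θ ∘ₗ (G.d ∘ₗ Θ') - Θ' ∘ₗ (G.d ∘ₗ Θ))
          = (G.d ∘ₗ Θ) ∘ₗ (G.d ∘ₗ Θ') - (G.d ∘ₗ Θ') ∘ₗ (G.d ∘ₗ Θ) ∧
      (Θ ∘ₗ (G.d ∘ₗ Θ') - Θ' ∘ₗ (G.d ∘ₗ Θ)) ∘ₗ G.d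
          = (Θ ∘ₗ G.d) ∘ₗ (Θ' ∘ₗ G.d) - (Θ' ∘ₗ G.d) ∘ₗ (Θ ∘ₗ G.d) ∧
      ldelta G (Θ ∘ₗ (G.d ∘ₗ Θ') - Θ' ∘ₗ (G.d ∘ₗ Θ))
          = Lop (G.d ∘ₗ Θ) (Θ ∘ₗ G.d) (ldelta G Θ')
            - Lop (G.d ∘ₗ Θ') (Θ' ∘ₗ G.d) (ldelta G Θ)) ∧
    (∀ (X0 : g0 →ₗ[F] g0) (X1 : gm →ₗ[F] gm) (lX : g0 →ₗ[F] g0 →ₗ[F] gm),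
      IsDer0 G.d G.b0 G.b1 G.l3 X0 X1 lX →
      ∀ Θ : g0 →ₗ[F] gm,
        G.d ∘ₗ (X1 ∘ₗ Θ - Θ ∘ₗ X0)
            = X0 ∘ₗ (G.d ∘ₗ Θ) - (G.d ∘ₗ Θ) ∘ₗ X0 ∧
        (X1 ∘ₗ Θ - Θ ∘ₗ X0) ∘ₗ G.d
            = X1 ∘ₗ (Θ ∘ₗ G.d) - (Θ ∘ₗ G.d) ∘ₗ X1 ∧
        ldelta G (X1 ∘ₗ Θ - Θ ∘ₗ X0)
            = Lop X0 X1 (ldelta G Θ) - Lop (G.d ∘ₗ Θ) (Θ ∘ₗ G.d) lX) := by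
  refine ⟨fun Θ Θ' => ⟨?_, ?_, ?_⟩, fun X0 X1 lX h Θ => ⟨?_, ?_, ?_⟩⟩
  · ext x; simp
  · ext x; simp
  · ext x y
    simp only [ldelta, Lop, LinearMap.sub_apply, LinearMap.add_apply, LinearMap.compr₂_apply,
      LinearMap.compl₂_apply, LinearMap.flip_apply, LinearMap.comp_apply, map_sub, map_add,
      G.ax_a1]
    rw [G.b0_skew y (G.d (Θ' x)), G.b0_skew y (G.d (Θ x)), G.ax_a2 (Θ' x) (Θ y),
      G.ax_a2 (Θ' y) (Θ x)]
    simp only [map_neg]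
    abel
  · have hc : ∀ a, X0 (G.d a) = G.d (X1 a) := fun a => LinearMap.congr_fun h.comm a
    ext x; simp [hc]
  · have hc : ∀ a, X0 (G.d a) = G.d (X1 a) := fun a => LinearMap.congr_fun h.comm a
    ext x; simp [hc]
  · have hs : ∀ x y, lX x y = - lX y x := by
      intro x y
      have h1 := h.alt (x + y)
      simp only [map_add, LinearMap.add_apply, h.alt, zero_add, add_zero] at h1
      first
        | exact eq_neg_of_add_eq_zero_left h1
        | exact eq_neg_of_add_eq_zero_right h1
    ext x y
    simp only [ldelta, Lop, LinearMap.sub_apply, LinearMap.add_apply, LinearMap.compr₂_apply,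
      LinearMap.compl₂_apply, LinearMap.flip_apply, LinearMap.comp_apply, map_sub, map_add,
      h.der_a]
    rw [hs (G.d (Θ x)) y, h.der_b, h.der_b, G.b0_skew (X0 x) y]
    simp only [map_sub, map_neg, h.der_a]
    abel
end

section
/- Let g be a Lie 2-algebra over a field F. For all τ, τ′ ∈ Hom(g₀,g₋₁), ∂(τ ⋆ τ′) = ∂(τ) ⋄ ∂(τ′). Componentwise: (id + d∘τ)∘(id + d∘τ′) = id + d∘(τ ⋆ τ′); (id + τ∘d)∘(id + τ′∘d) = id + (τ ⋆ τ′)∘d; and for all x,y ∈ g₀: l^{id}_τ((id + d∘τ′)x, (id + d∘τ′)y) + (id + τ∘d)(l^{id}_{τ′}(x,y)) = l^{id}_{τ⋆τ′}(x,y). -/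
open LinearMap

/-- The multiplication `τ ⋆ τ′ = τ + τ′ + τ∘d∘τ′` on `Hom(g₀,g₋₁)`. -/
def starm {F : Type*} [Field F] {g0 gm : Type*}
    [AddCommGroup g0] [Module F g0] [AddCommGroup gm] [Module F gm]
    (d : gm →ₗ[F] g0) (τ τ' : g0 →ₗ[F] gm) : g0 →ₗ[F] gm :=
  τ + τ' + τ ∘ₗ (d ∘ₗ τ')

/-- `l^{id}_τ(x,y) = τ[x,y] − [x,τy] − [τx,y] − [τx,dτy]`
(using `[a,x] = -[x,a]` to express the last two terms through `b1`). -/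
def lid {F : Type*} [Field F] {g0 gm : Type*}
    [AddCommGroup g0] [Module F g0] [AddCommGroup gm] [Module F gm]
    (G : LieTwoAlg F g0 gm) (τ : g0 →ₗ[F] gm) (x y : g0) : gm :=
  τ (G.b0 x y) - G.b1 x (τ y) + G.b1 y (τ x) + G.b1 (G.d (τ y)) (τ x)

/-- `∂ : (Hom(g₀,g₋₁), ⋆) → (Aut⁰(g), ⋄)` is multiplicative,
`∂(τ ⋆ τ′) = ∂(τ) ⋄ ∂(τ′)`, componentwise. -/
theorem partial_multiplicative
    {F : Type*} [Field F] {g0 gm : Type*}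
    [AddCommGroup g0] [Module F g0] [AddCommGroup gm] [Module F gm]
    (G : LieTwoAlg F g0 gm) :
    ∀ τ τ' : g0 →ₗ[F] gm,
      (∀ x : g0,
        (x + G.d (τ' x)) + G.d (τ (x + G.d (τ' x)))
          = x + G.d (starm G.d τ τ' x)) ∧
      (∀ a : gm,
        (a + τ' (G.d a)) + τ (G.d (a + τ' (G.d a)))
          = a + starm G.d τ τ' (G.d a)) ∧
      (∀ x y : g0,
        lid G τ (x + G.d (τ' x)) (y + G.d (τ' y))
            + (lid G τ' x y + τ (G.d (lid G τ' x y)))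
          = lid G (starm G.d τ τ') x y) := by
  intro τ τ'
  refine ⟨fun x => ?_, fun a => ?_, fun x y => ?_⟩
  · simp only [starm, map_add, LinearMap.add_apply, LinearMap.comp_apply]
    abel
  · simp only [starm, map_add, LinearMap.add_apply, LinearMap.comp_apply]
    abel
  · have h1 := G.b0_skew (G.d (τ' x)) y
    have h2 := G.b0_skew (G.d (τ' x)) (G.d (τ' y))
    have h3 := G.ax_a2 (τ' x) (τ y)
    have h4 := G.ax_a2 (τ' x) (τ (G.d (τ' y)))
    simp only [lid, starm, map_add, map_sub, map_neg, LinearMap.add_apply,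
      LinearMap.comp_apply, G.ax_a1, h1, h2, h3, h4]
    abel
end

section
/- Let g₀, g₋₁ be vector spaces over a field F and d : g₋₁ → g₀ linear; equip Hom(g₀,g₋₁) with τ ⋆ τ′ := τ + τ′ + τ∘d∘τ′. Let τ ∈ Hom(g₀,g₋₁) be ⋆-invertible with ⋆-inverse τ⁻¹. Then for every τ′ ∈ Hom(g₀,g₋₁): (id + τ∘d)∘τ′∘(id + d∘τ)⁻¹ = τ ⋆ τ′ ⋆ τ⁻¹ (the Peiffer identity ∂(τ) ▷ τ′ = τ ⋆ τ′ ⋆ τ⁻¹). Equivalently, both sides equal τ′ + τ∘d∘τ′ + τ′∘d∘τ⁻¹ + τ∘d∘τ′∘d∘τ⁻¹. -/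
open LinearMap

/-- the Peiffer identity `∂(τ) ▷ τ′ = τ ⋆ τ′ ⋆ τ⁻¹`:
for a ⋆-invertible `τ` (with ⋆-inverse `τ⁻¹`, so that
`(id + d∘τ)⁻¹ = id + d∘τ⁻¹`) and any `τ′`,
`(id + τ∘d) ∘ τ′ ∘ (id + d∘τ)⁻¹ = τ ⋆ τ′ ⋆ τ⁻¹
  = τ′ + τ∘d∘τ′ + τ′∘d∘τ⁻¹ + τ∘d∘τ′∘d∘τ⁻¹`. -/
theorem peiffer_identity
    {F : Type*} [Field F] {g0 gm : Type*}
    [AddCommGroup g0] [Module F g0] [AddCommGroup gm] [Module F gm]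
    (d : gm →ₗ[F] g0) (τ τinv : g0 →ₗ[F] gm)
    (h1 : starm d τ τinv = 0) (h2 : starm d τinv τ = 0) :
    (∀ τ' : g0 →ₗ[F] gm,
      (LinearMap.id + τ ∘ₗ d) ∘ₗ (τ' ∘ₗ (LinearMap.id + d ∘ₗ τinv))
          = starm d τ (starm d τ' τinv) ∧
      starm d τ (starm d τ' τinv)
          = τ' + τ ∘ₗ (d ∘ₗ τ') + τ' ∘ₗ (d ∘ₗ τinv)
            + τ ∘ₗ (d ∘ₗ (τ' ∘ₗ (d ∘ₗ τinv)))) ∧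
    (LinearMap.id + d ∘ₗ τ) ∘ₗ (LinearMap.id + d ∘ₗ τinv) = LinearMap.id ∧
    (LinearMap.id + d ∘ₗ τinv) ∘ₗ (LinearMap.id + d ∘ₗ τ) = LinearMap.id := by
  have e1 : ∀ x, τ x + τinv x + τ (d (τinv x)) = 0 := fun x => by
    simpa [starm] using LinearMap.congr_fun h1 x
  have e2 : ∀ x, τinv x + τ x + τinv (d (τ x)) = 0 := fun x => by
    simpa [starm] using LinearMap.congr_fun h2 x
  have key : ∀ τ' : g0 →ₗ[F] gm, starm d τ (starm d τ' τinv)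
          = τ' + τ ∘ₗ (d ∘ₗ τ') + τ' ∘ₗ (d ∘ₗ τinv)
            + τ ∘ₗ (d ∘ₗ (τ' ∘ₗ (d ∘ₗ τinv))) := by
    intro τ'
    ext x
    simp only [starm, LinearMap.add_apply, LinearMap.comp_apply, map_add]
    rw [← sub_eq_zero, ← e1 x]
    abel
  refine ⟨fun τ' => ⟨?_, key τ'⟩, ?_, ?_⟩
  · rw [key]
    ext x
    simp only [LinearMap.add_apply, LinearMap.comp_apply, map_add, LinearMap.id_apply]
    abel
  · ext x
    have h := congrArg d (e1 x)
    simp only [map_add, map_zero] at h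
    simp only [LinearMap.add_apply, LinearMap.comp_apply, map_add, LinearMap.id_apply]
    rw [← sub_eq_zero, ← h]
    abel
  · ext x
    have h := congrArg d (e2 x)
    simp only [map_add, map_zero] at h
    simp only [LinearMap.add_apply, LinearMap.comp_apply, map_add, LinearMap.id_apply]
    rw [← sub_eq_zero, ← h]
    abel
end

section
/- Let g₀, g₋₁ be finite-dimensional real vector spaces, X₀ ∈ End(g₀), X₁ ∈ End(g₋₁), and l_X : g₀ × g₀ → g₋₁ a bilinear map. Define E(t)(x,y) := ∑_{n=1}^∞ (tⁿ/n!) ∑_{i+j+k=n−1, i,j,k≥0} C(i+j, i) · X₁ᵏ( l_X(X₀ⁱ x, X₀ʲ y) ). Then for all fixed x,y ∈ g₀, the map t ↦ E(t)(x,y) is differentiable and d/dt E(t)(x,y) = l_X(exp(tX₀)x, exp(tX₀)y) + X₁( E(t)(x,y) ) for every t ∈ ℝ. -/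
open LinearMap

/-- The exponential `exp(X) m = ∑ Xⁿm/n!` of a linear endomorphism. -/
noncomputable def expv {M : Type*} [NormedAddCommGroup M] [NormedSpace ℝ M]
    (X : M →ₗ[ℝ] M) (m : M) : M :=
  ∑' n : ℕ, ((n.factorial : ℝ))⁻¹ • (X ^ n) m

/-- The series
`E(t)(x,y) = ∑_{n≥1} (tⁿ/n!) ∑_{i+j+k=n−1} C(i+j,i) X₁ᵏ l_X(X₀ⁱx, X₀ʲy)`. -/
noncomputable def Eser {g0 gm : Type*}
    [NormedAddCommGroup g0] [NormedSpace ℝ g0]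
    [NormedAddCommGroup gm] [NormedSpace ℝ gm]
    (X0 : g0 →ₗ[ℝ] g0) (X1 : gm →ₗ[ℝ] gm) (lX : g0 →ₗ[ℝ] g0 →ₗ[ℝ] gm)
    (t : ℝ) (x y : g0) : gm :=
  ∑' n : ℕ, (t ^ (n + 1) / ((n + 1).factorial : ℝ)) •
    ∑ c ∈ Finset.Nat.antidiagonalTuple 3 n,
      (((c 0 + c 1).choose (c 0) : ℝ)) •
        (X1 ^ (c 2)) (lX ((X0 ^ (c 0)) x) ((X0 ^ (c 1)) y))

open Finset in
theorem S_eq {g0 gm : Type*}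
    [NormedAddCommGroup g0] [NormedSpace ℝ g0]
    [NormedAddCommGroup gm] [NormedSpace ℝ gm]
    (X0 : g0 →ₗ[ℝ] g0) (X1 : gm →ₗ[ℝ] gm) (lX : g0 →ₗ[ℝ] g0 →ₗ[ℝ] gm)
    (x y : g0) (n : ℕ) :
    ∑ c ∈ Finset.Nat.antidiagonalTuple 3 n,
      (((c 0 + c 1).choose (c 0) : ℝ)) •
        (X1 ^ (c 2)) (lX ((X0 ^ (c 0)) x) ((X0 ^ (c 1)) y))
    = ∑ p ∈ antidiagonal n, (X1 ^ p.2) (∑ q ∈ antidiagonal p.1,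
        ((p.1.choose q.1 : ℝ)) • (lX ((X0 ^ q.1) x) ((X0 ^ q.2) y))) := by
  simp only [map_sum, map_smul]
  rw [Finset.sum_sigma']
  refine Finset.sum_bij' (fun c _ => ⟨(c 0 + c 1, c 2), (c 0, c 1)⟩)
    (fun s _ => ![s.2.1, s.2.2, s.1.2]) ?_ ?_ ?_ ?_ ?_
  · intro c hc
    rw [Finset.Nat.mem_antidiagonalTuple, Fin.sum_univ_three] at hc
    simp [hc]
  · rintro ⟨⟨a, b⟩, ⟨u, v⟩⟩ h
    simp only [mem_sigma, HasAntidiagonal.mem_antidiagonal] at h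
    rw [Finset.Nat.mem_antidiagonalTuple, Fin.sum_univ_three]
    simp; omega
  · intro c hc
    ext i; fin_cases i <;> rfl
  · rintro ⟨⟨a, b⟩, ⟨u, v⟩⟩ h
    simp only [mem_sigma, HasAntidiagonal.mem_antidiagonal] at h
    obtain ⟨h1, h2⟩ := h
    subst h2; rfl
  · intro c hc
    rfl

open Finset in
theorem S_succ {gm : Type*} [NormedAddCommGroup gm] [NormedSpace ℝ gm]
    (X1 : gm →ₗ[ℝ] gm) (B : ℕ → gm) (n : ℕ) :
    ∑ p ∈ antidiagonal (n+1), (X1 ^ p.2) (B p.1)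
      = B (n+1) + X1 (∑ p ∈ antidiagonal n, (X1 ^ p.2) (B p.1)) := by
  rw [Finset.Nat.sum_antidiagonal_succ']
  simp [pow_succ', map_sum]

theorem key {gm : Type*} [NormedAddCommGroup gm] [NormedSpace ℝ gm] [FiniteDimensional ℝ gm]
    (X1 : gm →ₗ[ℝ] gm) (B S : ℕ → gm) (h0 : S 0 = B 0)
    (hS : ∀ n, S (n+1) = B (n+1) + X1 (S n)) (K b : ℝ) (hb : 0 ≤ b)
    (hB : ∀ n, ‖B n‖ ≤ K * b ^ n) (t : ℝ) :
    HasDerivAt (fun s : ℝ => ∑' n : ℕ, (s ^ (n+1) / ((n+1).factorial : ℝ)) • S n)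
      ((∑' n : ℕ, (t ^ n / (n.factorial : ℝ)) • B n) +
        X1 (∑' n : ℕ, (t ^ (n+1) / ((n+1).factorial : ℝ)) • S n)) t := by
  have := FiniteDimensional.complete ℝ gm
  have hK : 0 ≤ K := by simpa using (norm_nonneg _).trans (hB 0)
  set Y := LinearMap.toContinuousLinearMap X1
  have hY : ∀ v, X1 v = Y v := fun v => rfl
  set q := b + ‖Y‖
  have hq : 0 ≤ q := by positivity
  have hbq : b ≤ q := by simp [q]
  have hSn : ∀ n, ‖S n‖ ≤ K * q ^ n := by
    intro n
    induction n with
    | zero => simpa [h0] using hB 0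
    | succ n ih =>
      rw [hS, hY]
      calc _ ≤ ‖B (n+1)‖ + ‖Y (S n)‖ := norm_add_le _ _
        _ ≤ K * b ^ (n+1) + ‖Y‖ * (K * q ^ n) := by
          gcongr
          · exact hB _
          · exact (Y.le_opNorm _).trans (by gcongr)
        _ = b ^ n * (K * b) + ‖Y‖ * (K * q ^ n) := by ring
        _ ≤ q ^ n * (K * b) + ‖Y‖ * (K * q ^ n) := by gcongr
        _ = K * q ^ (n+1) := by simp only [q]; ring
  have hsum : ∀ (A : ℕ → gm) (r : ℝ), 0 ≤ r → (∀ n, ‖A n‖ ≤ K * r ^ n) → ∀ T : ℝ, 0 ≤ T →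
      Summable (fun n : ℕ => T ^ n / (n.factorial : ℝ) * (K * r ^ n)) := by
    intro A r hr hA T hT
    refine ((Real.summable_pow_div_factorial (T * r)).mul_left K).congr fun n => ?_
    rw [mul_pow]; ring
  have hsumm : ∀ (A : ℕ → gm) (r : ℝ), 0 ≤ r → (∀ n, ‖A n‖ ≤ K * r ^ n) → 
      Summable (fun n : ℕ => (t ^ n / (n.factorial : ℝ)) • A n) := by
    intro A r hr hA
    refine Summable.of_norm_bounded (hsum A r hr hA |t| (abs_nonneg _)) fun n => ?_
    rw [norm_smul, norm_div, norm_pow, Real.norm_eq_abs, Real.norm_natCast]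
    gcongr
    exact hA n
  have hder : HasDerivAt (fun s : ℝ => ∑' n : ℕ, (s ^ (n+1) / ((n+1).factorial : ℝ)) • S n)
      (∑' n : ℕ, (t ^ n / (n.factorial : ℝ)) • S n) t := by
    refine hasDerivAt_tsum_of_isPreconnected (t := Metric.ball (0:ℝ) (|t|+1)) (y₀ := 0)
      (hsum S q hq hSn (|t|+1) (by positivity)) Metric.isOpen_ball
      (convex_ball _ _).isPreconnected (g' := fun n s => (s ^ n / (n.factorial : ℝ)) • S n)
      ?_ ?_ ?_ ?_ ?_
    · intro n s _
      have := ((hasDerivAt_pow (n+1) s).div_const ((n+1).factorial : ℝ)).smul_const (S n)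
      convert this using 2
      rw [Nat.factorial_succ]; push_cast
      have : (n.factorial : ℝ) ≠ 0 := by positivity
      have : (n:ℝ) + 1 ≠ 0 := by positivity
      try simp only [Nat.add_sub_cancel]
      field_simp
    · intro n s hs
      rw [norm_smul, norm_div, norm_pow, Real.norm_natCast]
      have : ‖s‖ ≤ |t| + 1 := by simpa using (mem_ball_zero_iff.1 hs).le
      gcongr
      exact hSn n
    · simp; positivity
    · simp
    · simp
  have hd2 : Summable (fun n : ℕ => (t ^ n / (n.factorial : ℝ)) • S n) := hsumm S q hq hSn
  have hB2 : Summable (fun n : ℕ => (t ^ n / (n.factorial : ℝ)) • B n) := hsumm B b hb hB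
  have hd3 : Summable (fun n : ℕ => (t ^ (n+1) / ((n+1).factorial : ℝ)) • S n) := by
    have := Summable.of_norm_bounded (f := fun n : ℕ => (t ^ (n+1) / ((n+1).factorial : ℝ)) • S n)
      ((hsum S q hq hSn |t| (abs_nonneg _)).mul_left |t|) (fun n => by
        rw [norm_smul, norm_div, norm_pow, Real.norm_eq_abs, Real.norm_natCast, ← mul_assoc,
          ← mul_div_assoc, ← pow_succ']
        gcongr
        · omega
        · exact hSn n)
    exact this
  convert hder using 1
  rw [hd2.tsum_eq_zero_add, hB2.tsum_eq_zero_add, hY, Y.map_tsum hd3, add_assoc,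
    ← Summable.tsum_add ((summable_nat_add_iff 1).2 hB2)]
  · simp [h0, hS, hY]
  · simpa using Y.summable hd3

open Finset in
theorem cauchy {g0 gm : Type*}
    [NormedAddCommGroup g0] [NormedSpace ℝ g0] [FiniteDimensional ℝ g0]
    [NormedAddCommGroup gm] [NormedSpace ℝ gm] [FiniteDimensional ℝ gm]
    (X0 : g0 →ₗ[ℝ] g0) (L : g0 →L[ℝ] g0 →L[ℝ] gm)
    (x y : g0) (t : ℝ) :
    L (expv (t • X0) x) (expv (t • X0) y) = ∑' n : ℕ, (t ^ n / (n.factorial : ℝ)) • 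
      ∑ q ∈ antidiagonal n, ((n.choose q.1 : ℝ)) • (L ((X0 ^ q.1) x) ((X0 ^ q.2) y)) := by
  have := FiniteDimensional.complete ℝ gm
  have := FiniteDimensional.complete ℝ g0
  set Z := LinearMap.toContinuousLinearMap X0
  have hZ : ∀ n v, ‖(X0 ^ n) v‖ ≤ ‖Z‖ ^ n * ‖v‖ := by
    intro n v
    induction n with
    | zero => simp
    | succ n ih =>
      rw [pow_succ', Module.End.mul_apply, pow_succ', mul_assoc]
      exact (Z.le_opNorm _).trans (by gcongr)
  have hs : ∀ v, Summable fun n : ℕ => ‖((n.factorial : ℝ))⁻¹ • ((t • X0) ^ n) v‖ := by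
    intro v
    refine Summable.of_nonneg_of_le (fun _ => norm_nonneg _) (fun n => ?_)
      ((Real.summable_pow_div_factorial (|t| * ‖Z‖)).mul_left ‖v‖)
    rw [smul_pow, LinearMap.smul_apply, norm_smul, norm_smul, norm_inv, Real.norm_natCast,
      norm_pow, Real.norm_eq_abs]
    calc _ ≤ (n.factorial : ℝ)⁻¹ * (|t| ^ n * (‖Z‖ ^ n * ‖v‖)) := by gcongr; exact hZ n v
      _ = _ := by rw [mul_pow]; ring
  unfold expv
  set f := fun n : ℕ => ((n.factorial : ℝ))⁻¹ • ((t • X0) ^ n) x with hf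
  set g := fun n : ℕ => ((n.factorial : ℝ))⁻¹ • ((t • X0) ^ n) y with hg
  have hprod : Summable fun p : ℕ × ℕ => L (f p.1) (g p.2) := by
    refine Summable.of_norm_bounded (((hs x).mul_of_nonneg (hs y) (fun _ => norm_nonneg _)
      (fun _ => norm_nonneg _)).mul_left ‖L‖) fun p => ?_
    rw [← mul_assoc]
    exact L.le_opNorm₂ _ _
  have h1 : L (∑' n, f n) (∑' n, g n) = ∑' p : ℕ × ℕ, L (f p.1) (g p.2) := by
    rw [hprod.tsum_prod, L.map_tsum (hs x).of_norm]
    have := (ContinuousLinearMap.apply ℝ gm (∑' n, g n)).map_tsum (L.summable (hs x).of_norm)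
    simp only [ContinuousLinearMap.apply_apply] at this
    rw [this]
    refine tsum_congr fun n => ?_
    exact (L (f n)).map_tsum (hs y).of_norm
  rw [h1, ← Finset.HasAntidiagonal.sigmaAntidiagonalEquivProd.tsum_eq]
  refine (Finset.HasAntidiagonal.sigmaAntidiagonalEquivProd.summable_iff.2 hprod).tsum_sigma.trans ?_
  refine tsum_congr fun n => ?_
  rw [tsum_fintype, ← Finset.sum_coe_sort (antidiagonal n), Finset.smul_sum]
  refine Finset.sum_congr rfl fun ⟨⟨i, j⟩, hij⟩ _ => ?_
  rw [HasAntidiagonal.mem_antidiagonal] at hij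
  simp only at hij
  subst hij
  change L (f i) (g j) = _
  simp only [hf, hg, smul_pow, LinearMap.smul_apply,
    map_smul, _root_.smul_apply, smul_smul]
  congr 1
  rw [Nat.choose_symm_add, Nat.add_choose, Nat.cast_div (Nat.factorial_mul_factorial_dvd_factorial_add i j) (by positivity)]
  push_cast
  have h1 : ((i+j).factorial : ℝ) ≠ 0 := by positivity
  have h1 : ((i).factorial : ℝ) ≠ 0 := by positivity
  have h1 : ((j).factorial : ℝ) ≠ 0 := by positivity
  field_simp
  ring

open Finset in
theorem B_bound {g0 gm : Type*}
    [NormedAddCommGroup g0] [NormedSpace ℝ g0] [FiniteDimensional ℝ g0]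
    [NormedAddCommGroup gm] [NormedSpace ℝ gm] [FiniteDimensional ℝ gm]
    (X0 : g0 →ₗ[ℝ] g0) (L : g0 →L[ℝ] g0 →L[ℝ] gm)
    (x y : g0) : ∃ K b : ℝ, 0 ≤ b ∧ ∀ n, 
     ‖∑ q ∈ antidiagonal n, ((n.choose q.1 : ℝ)) • (L ((X0 ^ q.1) x) ((X0 ^ q.2) y))‖ 
       ≤ K * b ^ n := by
  set Z := LinearMap.toContinuousLinearMap X0
  have hZ : ∀ n v, ‖(X0 ^ n) v‖ ≤ ‖Z‖ ^ n * ‖v‖ := by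
    intro n v
    induction n with
    | zero => simp
    | succ n ih =>
      rw [pow_succ', Module.End.mul_apply, pow_succ', mul_assoc]
      exact (Z.le_opNorm _).trans (by gcongr)
  refine ⟨‖L‖ * ‖x‖ * ‖y‖, ‖Z‖ + ‖Z‖, by positivity, fun n => ?_⟩
  rw [(Commute.all ‖Z‖ ‖Z‖).add_pow', Finset.mul_sum]
  refine norm_sum_le_of_le _ fun q _ => ?_
  rw [norm_smul, Real.norm_natCast, nsmul_eq_mul]
  calc _ ≤ (n.choose q.1 : ℝ) * (‖L‖ * (‖Z‖ ^ q.1 * ‖x‖) * (‖Z‖ ^ q.2 * ‖y‖)) := by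
        gcongr
        refine (L.le_opNorm₂ _ _).trans ?_
        gcongr
        · exact hZ _ _
        · exact hZ _ _
    _ = _ := by ring

/-- the series `E(t)(x,y)` satisfies the ODE
`d/dt E(t)(x,y) = l_X(exp(tX₀)x, exp(tX₀)y) + X₁(E(t)(x,y))`. -/
theorem Eser_hasDerivAt
    {g0 gm : Type*}
    [NormedAddCommGroup g0] [NormedSpace ℝ g0] [FiniteDimensional ℝ g0]
    [NormedAddCommGroup gm] [NormedSpace ℝ gm] [FiniteDimensional ℝ gm]
    (X0 : g0 →ₗ[ℝ] g0) (X1 : gm →ₗ[ℝ] gm) (lX : g0 →ₗ[ℝ] g0 →ₗ[ℝ] gm)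
    (x y : g0) (t : ℝ) :
    HasDerivAt (fun s : ℝ => Eser X0 X1 lX s x y)
      (lX (expv (t • X0) x) (expv (t • X0) y) + X1 (Eser X0 X1 lX t x y)) t := by
  obtain ⟨L, hL⟩ : ∃ L : g0 →L[ℝ] g0 →L[ℝ] gm, ∀ u v, lX u v = L u v :=
    ⟨LinearMap.toContinuousLinearMap
      ((LinearMap.toContinuousLinearMap : (g0 →ₗ[ℝ] gm) ≃ₗ[ℝ] (g0 →L[ℝ] gm)).toLinearMap ∘ₗ lX),
      fun u v => rfl⟩
  obtain ⟨K, b, hb, hB⟩ := B_bound X0 L x y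
  unfold Eser
  simp only [S_eq]
  simp only [hL]
  rw [cauchy]
  exact key X1 _ _ (by simp) (fun n => S_succ X1
    (fun m => ∑ q ∈ Finset.HasAntidiagonal.antidiagonal m,
      ((m.choose q.1 : ℝ)) • (L ((X0 ^ q.1) x) ((X0 ^ q.2) y))) n) K b hb hB t
end

section
/- Let g₀, g₋₁ be finite-dimensional real vector spaces, X₀ ∈ End(g₀), X₁ ∈ End(g₋₁), and l_X : g₀ × g₀ → g₋₁ a bilinear map. Define E(t)(x,y) := ∑_{n=1}^∞ (tⁿ/n!) ∑_{i+j+k=n−1, i,j,k≥0} C(i+j, i) · X₁ᵏ( l_X(X₀ⁱ x, X₀ʲ y) ). Then for all s,t ∈ ℝ and all x,y ∈ g₀: E(t+s)(x,y) = exp(tX₁)( E(s)(x,y) ) + E(t)( exp(sX₀)x, exp(sX₀)y ). -/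
open LinearMap

/-- exponential of a continuous linear endomorphism -/
noncomputable abbrev esExp {V : Type*} [NormedAddCommGroup V] [NormedSpace ℝ V]
    (T : V →L[ℝ] V) : V →L[ℝ] V := NormedSpace.exp T

theorem es_hasSum_exp {V : Type*} [NormedAddCommGroup V] [NormedSpace ℝ V] [CompleteSpace V]
    (T : V →L[ℝ] V) (v : V) :
    HasSum (fun n : ℕ => ((n.factorial : ℝ))⁻¹ • (T ^ n) v) (esExp T v) := by
  have h := NormedSpace.exp_series_hasSum_exp' (𝕂 := ℝ) T
  have := (ContinuousLinearMap.apply ℝ V v).hasSum h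
  simpa using this

theorem es_exp_add {V : Type*} [NormedAddCommGroup V] [NormedSpace ℝ V] [CompleteSpace V]
    (S T : V →L[ℝ] V) (h : Commute S T) :
    esExp (S + T) = esExp S * esExp T :=
  NormedSpace.exp_add_of_commute_of_mem_ball (𝕂 := ℝ) h
    ((NormedSpace.expSeries_radius_eq_top ℝ (V →L[ℝ] V)).symm ▸ edist_lt_top _ _)
    ((NormedSpace.expSeries_radius_eq_top ℝ (V →L[ℝ] V)).symm ▸ edist_lt_top _ _)

theorem es_exp_smul_add {V : Type*} [NormedAddCommGroup V] [NormedSpace ℝ V] [CompleteSpace V]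
    (S T : V →L[ℝ] V) (h : Commute S T) (s : ℝ) (v : V) :
    esExp (s • (S + T)) v = esExp (s • S) (esExp (s • T) v) := by
  rw [smul_add, es_exp_add _ _ ((h.smul_left s).smul_right s), mul_apply_eq_comp]

theorem es_hasSum_smul {V : Type*} [NormedAddCommGroup V] [NormedSpace ℝ V] [CompleteSpace V]
    (T : V →L[ℝ] V) (s : ℝ) (v : V) :
    HasSum (fun n : ℕ => ((n.factorial : ℝ))⁻¹ • s ^ n • (T ^ n) v) (esExp (s • T) v) := by
  have h := es_hasSum_exp (s • T) v
  simp only [smul_pow] at h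
  exact h

theorem es_intertwine {V W : Type*} [NormedAddCommGroup V] [NormedSpace ℝ V] [CompleteSpace V]
    [NormedAddCommGroup W] [NormedSpace ℝ W] [CompleteSpace W]
    (φ : V →L[ℝ] W) (T : V →L[ℝ] V) (S : W →L[ℝ] W) (h : ∀ v, φ (T v) = S (φ v)) (v : V) :
    φ (esExp T v) = esExp S (φ v) := by
  have hn : ∀ n : ℕ, φ ((T ^ n) v) = (S ^ n) (φ v) := by
    intro n
    induction n with
    | zero => simp
    | succ n ih => rw [pow_succ', pow_succ', mul_apply_eq_comp, mul_apply_eq_comp, h, ih]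
  have h1 := φ.hasSum (es_hasSum_exp T v)
  have h2 := es_hasSum_exp S (φ v)
  refine h1.unique ?_
  convert h2 using 2 with n
  rw [map_smul, hn]

theorem es_expv {V : Type*} [NormedAddCommGroup V] [NormedSpace ℝ V] [CompleteSpace V]
    (X : V →ₗ[ℝ] V) (T : V →L[ℝ] V) (h : ∀ v, T v = X v) (v : V) :
    expv X v = esExp T v := by
  have hn : ∀ n : ℕ, (X ^ n) v = (T ^ n) v := by
    intro n
    induction n with
    | zero => simp
    | succ n ih => simp [pow_succ', h, ih]
  unfold expv
  simp only [hn]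
  exact (es_hasSum_exp T v).tsum_eq

section
variable {B : Type*} [NormedAddCommGroup B] [NormedSpace ℝ B] [CompleteSpace B]

/-- block operator -/
noncomputable def esM (A D : B →L[ℝ] B) : (B × B) →L[ℝ] (B × B) :=
  (A.comp (ContinuousLinearMap.fst ℝ B B) + ContinuousLinearMap.snd ℝ B B).prod
    (D.comp (ContinuousLinearMap.snd ℝ B B))

theorem esM_apply (A D : B →L[ℝ] B) (z : B × B) : esM A D z = (A z.1 + z.2, D z.2) := by
  simp [esM]

/-- upper right block of the exponential -/
noncomputable def esF (A D : B →L[ℝ] B) (t : ℝ) (b : B) : B :=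
  (esExp (t • esM A D) (0, b)).1

theorem esF_add (A D : B →L[ℝ] B) (t s : ℝ) (b : B) :
    esF A D (t + s) b
      = esExp (t • A) (esF A D s b) + esF A D t (esExp (s • D) b) := by
  have hM : esExp ((t + s) • esM A D)
      = esExp (t • esM A D) * esExp (s • esM A D) := by
    rw [add_smul]
    exact es_exp_add _ _ (((Commute.refl _).smul_left t).smul_right s)
  have h2 : (esExp (s • esM A D) (0, b)).2 = esExp (s • D) b :=
    es_intertwine (ContinuousLinearMap.snd ℝ B B) (s • esM A D) (s • D)
      (by intro v; simp [esM_apply]) (0, b)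
  have h1 : ∀ c : B, esExp (t • esM A D) (c, 0) = (esExp (t • A) c, 0) := by
    intro c
    have := es_intertwine (ContinuousLinearMap.inl ℝ B B) (t • A) (t • esM A D)
      (by intro v; simp [esM_apply]) c
    simpa using this.symm
  unfold esF
  rw [hM, mul_apply_eq_comp]
  have h3 : esExp (s • esM A D) (0, b)
      = ((esExp (s • esM A D) (0, b)).1, 0) + (0, esExp (s • D) b) := by
    rw [← h2]; simp
  rw [h3, map_add, h1]
  simp

theorem esM_pow_snd (A D : B →L[ℝ] B) (b : B) (n : ℕ) :
    ((esM A D ^ n) (0, b)).2 = (D ^ n) b := by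
  induction n with
  | zero => simp
  | succ n ih => rw [pow_succ', mul_apply_eq_comp, esM_apply, ih, pow_succ']; rfl

theorem esM_pow_fst (A D : B →L[ℝ] B) (b : B) (n : ℕ) :
    ((esM A D ^ (n + 1)) (0, b)).1
      = ∑ p ∈ Finset.HasAntidiagonal.antidiagonal n, (A ^ p.1) ((D ^ p.2) b) := by
  induction n with
  | zero => simp [esM_apply]
  | succ n ih =>
    rw [pow_succ', mul_apply_eq_comp, esM_apply, ih, esM_pow_snd,
      Finset.Nat.sum_antidiagonal_succ]
    simp [pow_succ', add_comm]

theorem esF_hasSum (A D : B →L[ℝ] B) (t : ℝ) (b : B) :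
    HasSum (fun n : ℕ => (t ^ (n + 1) / ((n + 1).factorial : ℝ)) •
      ∑ p ∈ Finset.HasAntidiagonal.antidiagonal n, (A ^ p.1) ((D ^ p.2) b)) (esF A D t b) := by
  have h := (ContinuousLinearMap.fst ℝ B B).hasSum (es_hasSum_exp (t • esM A D) (0, b))
  rw [← hasSum_nat_add_iff' 1] at h
  convert h using 2 with n
  · rw [← esM_pow_fst]
    simp [smul_pow, smul_smul, div_eq_inv_mul]
  · simp [esF]

end

section
variable {g0 gm : Type*}
    [NormedAddCommGroup g0] [NormedSpace ℝ g0] [FiniteDimensional ℝ g0]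
    [NormedAddCommGroup gm] [NormedSpace ℝ gm] [FiniteDimensional ℝ gm]

/-- evaluation at `(x,y)` -/
noncomputable def esEv (x y : g0) : (g0 →L[ℝ] g0 →L[ℝ] gm) →L[ℝ] gm :=
  (ContinuousLinearMap.apply ℝ gm y).comp (ContinuousLinearMap.apply ℝ (g0 →L[ℝ] gm) x)

theorem esEv_apply (x y : g0) (b : g0 →L[ℝ] g0 →L[ℝ] gm) : esEv x y b = b x y := by
  simp [esEv]

theorem es_sum_tuple {M : Type*} [AddCommMonoid M] (n : ℕ) (f : ℕ → ℕ → ℕ → M) :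
    ∑ c ∈ Finset.Nat.antidiagonalTuple 3 n, f (c 0) (c 1) (c 2)
      = ∑ p ∈ Finset.HasAntidiagonal.antidiagonal n, ∑ q ∈ Finset.HasAntidiagonal.antidiagonal p.2, f q.1 q.2 p.1 := by
  rw [Finset.sum_sigma']
  refine Finset.sum_bij' (fun c _ => ⟨(c 2, c 0 + c 1), (c 0, c 1)⟩)
    (fun z _ => ![z.2.1, z.2.2, z.1.1]) ?_ ?_ ?_ ?_ ?_
  · intro c hc
    rw [Finset.Nat.mem_antidiagonalTuple, Fin.sum_univ_three] at hc
    simp only [Finset.mem_sigma, Finset.HasAntidiagonal.mem_antidiagonal]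
    refine ⟨?_, trivial⟩
    change c 2 + (c 0 + c 1) = n
    omega
  · rintro ⟨⟨k, m⟩, ⟨i, j⟩⟩ hz
    simp only [Finset.mem_sigma, Finset.HasAntidiagonal.mem_antidiagonal] at hz
    rw [Finset.Nat.mem_antidiagonalTuple, Fin.sum_univ_three]
    simp
    omega
  · intro c hc
    ext i
    fin_cases i <;> rfl
  · rintro ⟨⟨k, m⟩, ⟨i, j⟩⟩ hz
    simp only [Finset.mem_sigma, Finset.HasAntidiagonal.mem_antidiagonal] at hz
    obtain ⟨_, rfl⟩ := hz
    rfl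
  · intro c hc
    rfl

set_option maxHeartbeats 1000000 in
theorem es_main
    (X0 : g0 →L[ℝ] g0) (X1 : gm →L[ℝ] gm) (b : g0 →L[ℝ] g0 →L[ℝ] gm)
    (X0' : g0 →ₗ[ℝ] g0) (X1' : gm →ₗ[ℝ] gm) (lX : g0 →ₗ[ℝ] g0 →ₗ[ℝ] gm)
    (h0 : ∀ v, X0 v = X0' v) (h1 : ∀ v, X1 v = X1' v) (hb : ∀ v w, b v w = lX v w)
    (s t : ℝ) (x y : g0) :
    Eser X0' X1' lX (t + s) x y
      = expv (t • X1') (Eser X0' X1' lX s x y)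
        + Eser X0' X1' lX t (expv (s • X0') x) (expv (s • X0') y) := by
  have hp0 : ∀ (n : ℕ) v, (X0' ^ n) v = (X0 ^ n) v := by
    intro n v
    induction n with
    | zero => simp
    | succ n ih => simp [pow_succ', h0, ih]
  have hp1 : ∀ (n : ℕ) v, (X1' ^ n) v = (X1 ^ n) v := by
    intro n v
    induction n with
    | zero => simp
    | succ n ih => simp [pow_succ', h1, ih]
  have : CompleteSpace g0 := FiniteDimensional.complete ℝ g0
  have : CompleteSpace gm := FiniteDimensional.complete ℝ gm
  obtain ⟨A, hA⟩ : ∃ A : (g0 →L[ℝ] g0 →L[ℝ] gm) →L[ℝ] (g0 →L[ℝ] g0 →L[ℝ] gm), ∀ c x y, A c x y = X1 (c x y) :=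
    ⟨ContinuousLinearMap.compL ℝ g0 (g0 →L[ℝ] gm) (g0 →L[ℝ] gm)
      (ContinuousLinearMap.compL ℝ g0 gm gm X1), fun c x y => rfl⟩
  obtain ⟨D1, hD1⟩ : ∃ A : (g0 →L[ℝ] g0 →L[ℝ] gm) →L[ℝ] (g0 →L[ℝ] g0 →L[ℝ] gm), ∀ c x y, A c x y = c (X0 x) y :=
    ⟨(ContinuousLinearMap.compL ℝ g0 g0 (g0 →L[ℝ] gm)).flip X0, fun c x y => rfl⟩
  obtain ⟨D2, hD2⟩ : ∃ A : (g0 →L[ℝ] g0 →L[ℝ] gm) →L[ℝ] (g0 →L[ℝ] g0 →L[ℝ] gm), ∀ c x y, A c x y = c x (X0 y) :=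
    ⟨ContinuousLinearMap.compL ℝ g0 (g0 →L[ℝ] gm) (g0 →L[ℝ] gm)
      ((ContinuousLinearMap.compL ℝ g0 g0 gm).flip X0), fun c x y => rfl⟩
  have hcomm : Commute D1 D2 := by
    ext c x y
    simp [hD1, hD2]
  have hAn : ∀ (n : ℕ) (c : (g0 →L[ℝ] g0 →L[ℝ] gm)) x y, (A ^ n) c x y = (X1 ^ n) (c x y) := by
    intro n c x y
    induction n with
    | zero => simp
    | succ n ih => rw [pow_succ', pow_succ', mul_apply_eq_comp, mul_apply_eq_comp, hA, ih]
  have hD1n : ∀ (n : ℕ) (c : (g0 →L[ℝ] g0 →L[ℝ] gm)) x y, (D1 ^ n) c x y = c ((X0 ^ n) x) y := by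
    intro n
    induction n with
    | zero => simp
    | succ n ih =>
      intro c x y
      rw [pow_succ, pow_succ', mul_apply_eq_comp, ih, hD1]; rfl
  have hD2n : ∀ (n : ℕ) (c : (g0 →L[ℝ] g0 →L[ℝ] gm)) x y, (D2 ^ n) c x y = c x ((X0 ^ n) y) := by
    intro n
    induction n with
    | zero => simp
    | succ n ih =>
      intro c x y
      rw [pow_succ, pow_succ', mul_apply_eq_comp, ih, hD2]; rfl
  have hE : ∀ (c : (g0 →L[ℝ] g0 →L[ℝ] gm)) (P : g0 →L[ℝ] g0), Commute P X0 → (∀ x y, c x y = b (P x) (P y)) →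
      ∀ t x y, Eser X0' X1' lX t (P x) (P y) = esF A (D1 + D2) t c x y := by
    intro c P hP hc t x y
    have h := (esEv x y).hasSum (esF_hasSum A (D1 + D2) t c)
    rw [esEv_apply] at h
    rw [← h.tsum_eq]
    unfold Eser
    congr 1
    ext n
    rw [es_sum_tuple n (fun i j k => (((i + j).choose i : ℝ)) •
        (X1' ^ k) (lX ((X0' ^ i) (P x)) ((X0' ^ j) (P y))))]
    have hPn : ∀ (i : ℕ) v, (X0 ^ i) (P v) = P ((X0 ^ i) v) := by
      intro i v
      have := (hP.pow_right i).eq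
      exact (DFunLike.congr_fun this v).symm
    simp only [map_smul, map_sum]
    congr 1
    refine Finset.sum_congr rfl fun p _ => ?_
    rw [esEv_apply, hAn, hcomm.add_pow']
    simp only [_root_.sum_apply, map_sum, _root_.smul_apply,
      mul_apply_eq_comp, hD1n, hD2n, hc, map_nsmul]
    refine Finset.sum_congr rfl fun q hq => ?_
    rw [Finset.HasAntidiagonal.mem_antidiagonal] at hq
    rw [hq, hp1, hp0, hp0, ← hb, hPn, hPn, Nat.cast_smul_eq_nsmul]
  have hexp1 : ∀ (c : (g0 →L[ℝ] g0 →L[ℝ] gm)) x y, esExp (s • D1) c x y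
      = c (esExp (s • X0) x) y := by
    intro c x y
    have h1 := (esEv x y).hasSum (es_hasSum_smul D1 s c)
    have h2 := ((ContinuousLinearMap.apply ℝ gm y).comp c).hasSum (es_hasSum_smul X0 s x)
    rw [esEv_apply] at h1
    refine h1.unique ?_
    refine Eq.mp ?_ h2
    change _ = HasSum _ (((ContinuousLinearMap.apply ℝ gm y).comp c) (esExp (s • X0) x))
    congr 1
    ext n
    simp only [map_smul, esEv_apply, hD1n]
    rfl
  have hexp2 : ∀ (c : (g0 →L[ℝ] g0 →L[ℝ] gm)) x y, esExp (s • D2) c x y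
      = c x (esExp (s • X0) y) := by
    intro c x y
    have h1 := (esEv x y).hasSum (es_hasSum_smul D2 s c)
    have h2 := (c x).hasSum (es_hasSum_smul X0 s y)
    rw [esEv_apply] at h1
    refine h1.unique ?_
    convert h2 using 2 with n
    simp only [map_smul, esEv_apply, hD2n]
  have hexpD : ∀ (c : (g0 →L[ℝ] g0 →L[ℝ] gm)) x y, esExp (s • (D1 + D2)) c x y
      = c (esExp (s • X0) x) (esExp (s • X0) y) := by
    intro c x y
    rw [es_exp_smul_add _ _ hcomm, hexp1, hexp2]
  have hexpA : ∀ c : (g0 →L[ℝ] g0 →L[ℝ] gm), esExp (t • A) c x y = esExp (t • X1) (c x y) := by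
    intro c
    have := es_intertwine (esEv x y) (t • A) (t • X1)
      (by intro v; simp [esEv_apply, hA]) c
    simpa [esEv_apply] using this
  have hE1 : ∀ t, Eser X0' X1' lX t x y = esF A (D1 + D2) t b x y := fun t =>
    hE b 1 (Commute.one_left _) (by intro x y; simp) t x y
  have hE2 := hE (esExp (s • (D1 + D2)) b) (esExp (s • X0))
    (((Commute.refl X0).smul_left s).exp_left) (hexpD b) t x y
  rw [es_expv (s • X0') (s • X0) (by intro v; simp [h0]),
    es_expv (s • X0') (s • X0) (by intro v; simp [h0]),
    es_expv (t • X1') (t • X1) (by intro v; simp [h1]), hE1, hE1, hE2, esF_add, ← hexpA]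
  rfl

end

/-- the one-parameter property of the series `E`:
`E(t+s)(x,y) = exp(tX₁)(E(s)(x,y)) + E(t)(exp(sX₀)x, exp(sX₀)y)`. -/
theorem Eser_one_parameter
    {g0 gm : Type*}
    [NormedAddCommGroup g0] [NormedSpace ℝ g0] [FiniteDimensional ℝ g0]
    [NormedAddCommGroup gm] [NormedSpace ℝ gm] [FiniteDimensional ℝ gm]
    (X0 : g0 →ₗ[ℝ] g0) (X1 : gm →ₗ[ℝ] gm) (lX : g0 →ₗ[ℝ] g0 →ₗ[ℝ] gm)
    (s t : ℝ) (x y : g0) :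
    Eser X0 X1 lX (t + s) x y
      = expv (t • X1) (Eser X0 X1 lX s x y)
        + Eser X0 X1 lX t (expv (s • X0) x) (expv (s • X0) y) := by
  exact es_main (LinearMap.toContinuousLinearMap X0) (LinearMap.toContinuousLinearMap X1)
    (LinearMap.toContinuousLinearMap
      ((LinearMap.toContinuousLinearMap : (g0 →ₗ[ℝ] gm) ≃ₗ[ℝ] (g0 →L[ℝ] gm)).toLinearMap ∘ₗ lX))
    X0 X1 lX (by intro v; rfl) (by intro v; rfl) (by intro v w; rfl) s t x y
end
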